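/- Let X be a real Banach space, a < b real numbers, and let f^B : [a,b] → X be the break function f^B(t) = Σ_{k=1}^∞ [c_k·χ_{(s_k,b]}(t) + d_k·χ_{[s_k,b]}(t)] determined by an injective sequence (s_k) ⊆ [a,b] and sequences (c_k), (d_k) in X with Σ_k (‖c_k‖ + ‖d_k‖) < ∞. For n ∈ ℕ let f_n^B(t) = Σ_{k=1}^n [c_k·χ_{(s_k,b]}(t) + d_k·χ_{[s_k,b]}(t)] be the n-th partial sum. Then Var(f_n^B − f^B, [a,b]) → 0 as n → ∞. -/

import Mathlib

/-!
The difference `f_n^B - f^B` is minus the tail `∑_{k ≥ n}` of the series. Replacing `c_k`, `d_k` by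
`‖c_k‖`, `‖d_k‖` in that tail gives a real increasing function `G_n` on `[a, b]` with values between
`0` and `∑_{k ≥ n} (‖c_k‖ + ‖d_k‖)`, and every increment of the tail is bounded in norm by the
corresponding increment of `G_n` (`norm_breakTerm_sub_le`). By telescoping, the variation is at most
`∑_{k ≥ n} (‖c_k‖ + ‖d_k‖)` (`eVariationOn_le_of_norm_sub_le`), which tends to `0`.
-/

open Set Filter Topology ENNReal NNReal

/-- A function whose increments are dominated in norm by those of a real function `G` with values
in `[0, M]` has variation at most `M`. -/
lemma eVariationOn_le_of_norm_sub_le {X : Type*} [NormedAddCommGroup X] {f : ℝ → X} {G : ℝ → ℝ}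
    {S : Set ℝ} {M : ℝ} (hfG : ∀ x ∈ S, ∀ y ∈ S, x ≤ y → ‖f y - f x‖ ≤ G y - G x)
    (hG0 : ∀ x ∈ S, 0 ≤ G x) (hGM : ∀ x ∈ S, G x ≤ M) :
    eVariationOn f S ≤ ENNReal.ofReal M := by
  refine iSup_le ?_
  rintro ⟨m, u, hu, hmem⟩
  have hstep : ∀ i, ‖f (u (i + 1)) - f (u i)‖ ≤ G (u (i + 1)) - G (u i) := fun i =>
    hfG _ (hmem i) _ (hmem (i + 1)) (hu (Nat.le_succ i))
  calc ∑ i ∈ Finset.range m, edist (f (u (i + 1))) (f (u i))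
      ≤ ∑ i ∈ Finset.range m, ENNReal.ofReal (G (u (i + 1)) - G (u i)) := by
        refine Finset.sum_le_sum fun i _ => ?_
        rw [edist_dist, dist_eq_norm]
        exact ENNReal.ofReal_le_ofReal (hstep i)
    _ = ENNReal.ofReal (G (u m) - G (u 0)) := by
        rw [← ENNReal.ofReal_sum_of_nonneg fun i _ => (norm_nonneg _).trans (hstep i),
          Finset.sum_range_sub (fun i => G (u i))]
    _ ≤ ENNReal.ofReal M :=
        ENNReal.ofReal_le_ofReal (by linarith [hG0 _ (hmem 0), hGM _ (hmem m)])

/-- One term `c·χ_{(s,b]}(t) + d·χ_{[s,b]}(t)` of a break function. -/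
noncomputable def breakTerm {X : Type*} [AddCommGroup X] (b s : ℝ) (c d : X) (t : ℝ) : X :=
  (if s < t ∧ t ≤ b then c else 0) + (if s ≤ t ∧ t ≤ b then d else 0)

lemma norm_breakTerm_le {X : Type*} [NormedAddCommGroup X] (b s : ℝ) (c d : X) (t : ℝ) :
    ‖breakTerm b s c d t‖ ≤ ‖c‖ + ‖d‖ := by
  unfold breakTerm
  refine (norm_add_le _ _).trans (add_le_add ?_ ?_) <;> split_ifs <;> simp

lemma breakTerm_norm_nonneg {X : Type*} [NormedAddCommGroup X] (b s : ℝ) (c d : X) (t : ℝ) :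
    0 ≤ breakTerm b s ‖c‖ ‖d‖ t := by
  unfold breakTerm
  refine add_nonneg ?_ ?_ <;> split_ifs <;> simp

lemma breakTerm_norm_le {X : Type*} [NormedAddCommGroup X] (b s : ℝ) (c d : X) (t : ℝ) :
    breakTerm b s ‖c‖ ‖d‖ t ≤ ‖c‖ + ‖d‖ := by
  unfold breakTerm
  refine add_le_add ?_ ?_ <;> split_ifs <;> simp

/-- On `(-∞, b]`, increments of a term are dominated by those of the real term with coefficients
`‖c‖`, `‖d‖`. -/
lemma norm_breakTerm_sub_le {X : Type*} [NormedAddCommGroup X] (b s : ℝ) (c d : X) {x y : ℝ}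
    (hxy : x ≤ y) (hy : y ≤ b) :
    ‖breakTerm b s c d y - breakTerm b s c d x‖
      ≤ breakTerm b s ‖c‖ ‖d‖ y - breakTerm b s ‖c‖ ‖d‖ x := by
  have hx : x ≤ b := hxy.trans hy
  unfold breakTerm
  simp only [hx, hy, and_true]
  rw [add_sub_add_comm, add_sub_add_comm]
  refine (norm_add_le _ _).trans (add_le_add ?_ ?_)
  · by_cases h1 : s < x
    · simp [h1, h1.trans_le hxy]
    · by_cases h2 : s < y <;> simp [h1, h2]
  · by_cases h1 : s ≤ x
    · simp [h1, h1.trans hxy]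
    · by_cases h2 : s ≤ y <;> simp [h1, h2]

/-- **Approximation of a break function by its partial sums** (Remark 3.2).
Let `f^B(t) = Σ_{k} [c_k·χ_{(s_k,b]}(t) + d_k·χ_{[s_k,b]}(t)]` be a break function on
`[a,b]` and let `f_n^B` denote its `n`-th partial sum.  Then
`Var(f_n^B - f^B, [a,b]) → 0` as `n → ∞`. -/
theorem break_function_partial_sums_variation_tendsto_zero
    {X : Type*} [NormedAddCommGroup X] [NormedSpace ℝ X] [CompleteSpace X]
    {a b : ℝ} (hab : a < b)
    (s : ℕ → ℝ) (hs : Function.Injective s) (hmem : ∀ k, s k ∈ Set.Icc a b)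
    (c d : ℕ → X) (hsum : Summable fun k => ‖c k‖ + ‖d k‖) :
    Filter.Tendsto
      (fun n => eVariationOn
        (fun t =>
          (∑ k ∈ Finset.range n,
            ((if s k < t ∧ t ≤ b then c k else 0) +
             (if s k ≤ t ∧ t ≤ b then d k else 0))) -
          ∑' k, ((if s k < t ∧ t ≤ b then c k else 0) +
                 (if s k ≤ t ∧ t ≤ b then d k else 0)))
        (Set.Icc a b))
      Filter.atTop (nhds 0) := by
  change Tendsto (fun n => eVariationOn (fun t =>
      (∑ k ∈ Finset.range n, breakTerm b (s k) (c k) (d k) t) -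
        ∑' k, breakTerm b (s k) (c k) (d k) t) (Icc a b)) atTop (𝓝 0)
  have hX : ∀ t, Summable fun k => breakTerm b (s k) (c k) (d k) t := fun t =>
    Summable.of_norm_bounded hsum fun k => norm_breakTerm_le _ _ _ _ _
  have hR : ∀ t, Summable fun k => breakTerm b (s k) ‖c k‖ ‖d k‖ t := fun t =>
    Summable.of_nonneg_of_le (fun k => breakTerm_norm_nonneg _ _ _ _ _)
      (fun k => breakTerm_norm_le _ _ _ _ _) hsum
  have htail : Tendsto (fun n => ENNReal.ofReal (∑' k, (‖c (k + n)‖ + ‖d (k + n)‖)))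
      atTop (𝓝 0) := by
    simpa using ENNReal.tendsto_ofReal
      (tendsto_sum_nat_add fun k => ‖c k‖ + ‖d k‖)
  refine tendsto_of_tendsto_of_tendsto_of_le_of_le tendsto_const_nhds htail
    (fun _ => zero_le) fun n => ?_
  have hXn := fun t => (_root_.summable_nat_add_iff n).2 (hX t)
  have hRn := fun t => (_root_.summable_nat_add_iff n).2 (hR t)
  have hsn := (_root_.summable_nat_add_iff n).2 hsum
  refine eVariationOn_le_of_norm_sub_le
    (G := fun t => ∑' k, breakTerm b (s (k + n)) ‖c (k + n)‖ ‖d (k + n)‖ t) ?_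
    (fun t _ => tsum_nonneg fun k => breakTerm_norm_nonneg _ _ _ _ _)
    (fun t _ => (hRn t).tsum_le_tsum (fun k => breakTerm_norm_le _ _ _ _ _) hsn)
  intro x _ y hy hxy
  have hdiff : ∀ t, (∑ k ∈ Finset.range n, breakTerm b (s k) (c k) (d k) t) -
      ∑' k, breakTerm b (s k) (c k) (d k) t =
      -∑' k, breakTerm b (s (k + n)) (c (k + n)) (d (k + n)) t := fun t => by
    rw [← (hX t).sum_add_tsum_nat_add n]
    abel
  simp only [hdiff]
  rw [neg_sub_neg, norm_sub_rev, ← (hXn y).tsum_sub (hXn x), ← (hRn y).tsum_sub (hRn x)]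
  exact tsum_of_norm_bounded ((hRn y).sub (hRn x)).hasSum
    fun k => norm_breakTerm_sub_le _ _ _ _ hxy hy.2
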